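/- Let $\varphi$ and $\varphi_j$ be plurisubharmonic functions on a domain $D \subset \mathbb{C}^n$ with $\{\varphi_j\}$ locally uniformly bounded from above. If $\varphi_j \to \varphi$ locally in measure, then $\varphi_j \to \varphi$ in $L^p_{\mathrm{loc}}(D)$ for every $0 < p < \infty$. -/

import Mathlib

open MeasureTheory Filter
open scoped ENNReal

/-- Truncation of an extended-real value at level `-m`. -/
noncomputable def ERealTrunc (m : ℕ) (x : EReal) : ℝ := (max x (-(m : ℝ) : EReal)).toReal

/-- A function `u : ℂⁿ → [-∞, ∞)` is plurisubharmonic on `D` if it is upper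
semicontinuous, takes values in `[-∞, ∞)`, and all truncations satisfy the sub-mean
value inequality on circles contained (with their disks) in `D`. -/
def PlurisubharmonicOn {n : ℕ} (u : (Fin n → ℂ) → EReal)
    (D : Set ((Fin n → ℂ))) : Prop :=
  UpperSemicontinuousOn u D ∧ (∀ z ∈ D, u z ≠ ⊤) ∧
    ∀ z ∈ D, ∀ w : (Fin n → ℂ),
      (∀ t : ℂ, ‖t‖ ≤ 1 → z + t • w ∈ D) →
      ∀ m : ℕ,
        2 * Real.pi * ERealTrunc m (u z) ≤
          ∫ θ in (0 : ℝ)..(2 * Real.pi),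
            ERealTrunc m (u (z + Complex.exp (θ * Complex.I) • w))

/-!
A subharmonic function on a disc is dominated, by the maximum principle, by a multiple of the
logarithmic potential of any of its sublevel sets. Evaluating at the centre shows that the measure
of `{u < -t}` decays exponentially in `t`, at a rate depending only on an upper bound for `u` and a
lower bound for its value at the centre. Integrating over the complex lines through a point carries
this estimate to plurisubharmonic functions on `ℂⁿ`.

Hence, if each neighbourhood of `a` contains points where the functions stay bounded from below,
their tails decay exponentially, uniformly in the index, near `a`; and such decay in turn yields
points of this kind near every point of a neighbourhood of `a`. On a connected open set the
property therefore spreads from one point to all compact subsets, and convergence in measure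
supplies the first point. Exponential tails bound every `L^q` norm, so that the functions are
uniformly integrable in `L^p` for each finite `p`, and Vitali's theorem applies.
-/

section LogPotential

variable {E : Set ℂ}

lemma abs_log_sub_log_le {a b : ℝ} (ha : 0 < a) (hb : 0 < b) :
    |Real.log a - Real.log b| ≤ |a - b| * (a⁻¹ + b⁻¹) := by
  have log_sub_le {x y : ℝ} (hx : 0 < x) (hy : 0 < y) :
      Real.log x - Real.log y ≤ |x - y| * y⁻¹ :=
    calc Real.log x - Real.log y = Real.log (x / y) := (Real.log_div hx.ne' hy.ne').symm
      _ ≤ x / y - 1 := Real.log_le_sub_one_of_pos (div_pos hx hy)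
      _ = (x - y) * y⁻¹ := by field_simp
      _ ≤ |x - y| * y⁻¹ := by gcongr; exact le_abs_self _
  have hab := log_sub_le ha hb
  have hba := log_sub_le hb ha
  rw [abs_sub_comm b a] at hba
  have ha' : 0 ≤ |a - b| * a⁻¹ := by positivity
  have hb' : 0 ≤ |a - b| * b⁻¹ := by positivity
  rw [mul_add, abs_le]
  constructor <;> linarith

lemma integrableOn_inv_norm_ball (r : ℝ) :
    IntegrableOn (fun w : ℂ ↦ ‖w‖⁻¹) (Metric.ball 0 r) :=
  integrableOn_ball_of_norm_le_rpow (C := 1) (α := 1) (by simp) (by simp)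
    (ae_of_all _ fun w ↦ by simp [Real.rpow_neg_one]) (by fun_prop)

lemma integral_inv_norm_ball {r : ℝ} (hr : 0 ≤ r) :
    ∫ w in Metric.ball (0 : ℂ) r, ‖w‖⁻¹ = 2 * Real.pi * r := by
  have indicator_eq : (Metric.ball (0 : ℂ) r).indicator (fun w ↦ ‖w‖⁻¹) =
      fun w ↦ (Set.Iio r).indicator (fun y ↦ y⁻¹) ‖w‖ := by
    ext w
    simp [Set.indicator]
  rw [← integral_indicator Metric.isOpen_ball.measurableSet, indicator_eq,
    integral_fun_norm_addHaar]
  have radial : Set.EqOn (fun y : ℝ ↦ y ^ (Module.finrank ℝ ℂ - 1) •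
      (Set.Iio r).indicator (fun y ↦ y⁻¹) y) ((Set.Iio r).indicator 1) (Set.Ioi 0) := by
    intro y (hy : 0 < y)
    by_cases hyr : y < r <;> simp [hyr, hy.ne']
  rw [setIntegral_congr_fun measurableSet_Ioi radial, setIntegral_indicator measurableSet_Iio,
    Set.Ioi_inter_Iio]
  simp [hr, measureReal_def, mul_assoc]

lemma inv_norm_le_indicator_ball_add_one (w : ℂ) :
    ‖w‖⁻¹ ≤ (Metric.ball 0 1).indicator (fun w : ℂ ↦ ‖w‖⁻¹) w + 1 := by
  by_cases hw : w ∈ Metric.ball (0 : ℂ) 1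
  · rw [Set.indicator_of_mem hw]
    linarith
  · rw [Set.indicator_of_notMem hw, zero_add]
    exact inv_le_one_of_one_le₀ (by simpa using hw)

lemma integrable_indicator_ball_inv_norm_sub (z : ℂ) :
    Integrable fun ζ ↦ (Metric.ball 0 1).indicator (fun w : ℂ ↦ ‖w‖⁻¹) (z - ζ) :=
  ((integrable_indicator_iff Metric.isOpen_ball.measurableSet).2
    (integrableOn_inv_norm_ball 1)).comp_sub_left z

lemma integrableOn_inv_norm_sub (z : ℂ) (hE : volume E ≠ ∞) :
    IntegrableOn (fun ζ ↦ ‖z - ζ‖⁻¹) E :=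
  ((integrable_indicator_ball_inv_norm_sub z).integrableOn.add
    (integrableOn_const (C := (1 : ℝ)) hE)).mono' (by fun_prop) (ae_of_all _ fun ζ ↦ by
      simpa using inv_norm_le_indicator_ball_add_one (z - ζ))

lemma setIntegral_inv_norm_sub_le (z : ℂ) (hE : volume E ≠ ∞) :
    ∫ ζ in E, ‖z - ζ‖⁻¹ ≤ 2 * Real.pi + volume.real E := by
  set F : ℂ → ℝ := (Metric.ball 0 1).indicator fun w ↦ ‖w‖⁻¹
  have hF : Integrable fun ζ ↦ F (z - ζ) := integrable_indicator_ball_inv_norm_sub z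
  have F_nonneg (w : ℂ) : 0 ≤ F w := Set.indicator_nonneg (fun _ _ ↦ by positivity) w
  have integral_F : ∫ ζ, F (z - ζ) = 2 * Real.pi := by
    rw [integral_sub_left_eq_self F volume z, integral_indicator Metric.isOpen_ball.measurableSet,
      integral_inv_norm_ball zero_le_one, mul_one]
  calc ∫ ζ in E, ‖z - ζ‖⁻¹ ≤ ∫ ζ in E, (F (z - ζ) + 1) :=
        integral_mono (integrableOn_inv_norm_sub z hE)
          (hF.integrableOn.add (integrableOn_const hE))
          fun ζ ↦ inv_norm_le_indicator_ball_add_one (z - ζ)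
    _ = (∫ ζ in E, F (z - ζ)) + volume.real E := by
        rw [integral_add hF.integrableOn (integrableOn_const hE)]
        simp
    _ ≤ 2 * Real.pi + volume.real E := by
        rw [← integral_F]
        exact add_le_add_left
          (setIntegral_le_integral hF (ae_of_all _ fun ζ ↦ F_nonneg (z - ζ))) _

lemma ae_restrict_norm_sub_pos (z : ℂ) (E : Set ℂ) :
    ∀ᵐ ζ ∂volume.restrict E, 0 < ‖z - ζ‖ := by
  filter_upwards [ae_restrict_of_ae (Measure.ae_ne volume z)] with ζ hζ
  exact norm_pos_iff.2 (sub_ne_zero.2 hζ.symm)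

lemma integrableOn_log_norm_sub (z : ℂ) (hE : Bornology.IsBounded E) :
    IntegrableOn (fun ζ ↦ Real.log ‖z - ζ‖) E := by
  obtain ⟨r, hr⟩ := hE.subset_closedBall 0
  have hdom : IntegrableOn (fun ζ ↦ ‖z - ζ‖ + ‖z - ζ‖⁻¹) E :=
    (((by fun_prop : Continuous fun ζ ↦ ‖z - ζ‖).continuousOn.integrableOn_compact
      (isCompact_closedBall 0 r)).mono_set hr).add
      (integrableOn_inv_norm_sub z hE.measure_lt_top.ne)
  refine hdom.mono' (Measurable.log (by fun_prop)).aestronglyMeasurable ?_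
  filter_upwards [ae_restrict_norm_sub_pos z E] with ζ hζ
  have log_le := Real.log_le_sub_one_of_pos hζ
  have log_inv_le := Real.log_le_sub_one_of_pos (inv_pos.2 hζ)
  rw [Real.log_inv] at log_inv_le
  have := inv_pos.2 hζ
  rw [Real.norm_eq_abs, abs_le]
  constructor <;> linarith

/-- The logarithmic potential `z ↦ ∫_E log |z - ζ| dA(ζ)` of Lebesgue measure on `E`, the barrier
against which subharmonic functions are compared. -/
noncomputable def logPotential (E : Set ℂ) (z : ℂ) : ℝ := ∫ ζ in E, Real.log ‖z - ζ‖

lemma continuous_logPotential (hE : Bornology.IsBounded E) : Continuous (logPotential E) := by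
  set C := 2 * Real.pi + volume.real E
  have : 0 ≤ C := by positivity
  have hfin : volume E ≠ ∞ := hE.measure_lt_top.ne
  refine (LipschitzWith.of_dist_le_mul (K := (2 * C).toNNReal) fun z w ↦ ?_).continuous
  rw [Real.coe_toNNReal _ (by positivity), Real.dist_eq, dist_eq_norm]
  have hz := integrableOn_inv_norm_sub z hfin
  have hw := integrableOn_inv_norm_sub w hfin
  have hlogz := integrableOn_log_norm_sub z hE
  have hlogw := integrableOn_log_norm_sub w hE
  calc |logPotential E z - logPotential E w|
      = |∫ ζ in E, (Real.log ‖z - ζ‖ - Real.log ‖w - ζ‖)| := by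
        rw [integral_sub hlogz hlogw, logPotential, logPotential]
    _ ≤ ∫ ζ in E, |Real.log ‖z - ζ‖ - Real.log ‖w - ζ‖| := abs_integral_le_integral_abs
    _ ≤ ∫ ζ in E, ‖z - w‖ * (‖z - ζ‖⁻¹ + ‖w - ζ‖⁻¹) := by
        refine integral_mono_ae (hlogz.sub hlogw).abs ((hz.add hw).const_mul _) ?_
        filter_upwards [ae_restrict_norm_sub_pos z E, ae_restrict_norm_sub_pos w E] with ζ hζz hζw
        refine (abs_log_sub_log_le hζz hζw).trans ?_
        gcongr
        simpa using abs_norm_sub_norm_le (z - ζ) (w - ζ)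
    _ = ‖z - w‖ * ((∫ ζ in E, ‖z - ζ‖⁻¹) + ∫ ζ in E, ‖w - ζ‖⁻¹) := by
        rw [integral_const_mul, integral_add hz hw]
    _ ≤ ‖z - w‖ * (C + C) := by
        gcongr <;> exact setIntegral_inv_norm_sub_le _ hfin
    _ = 2 * C * ‖z - w‖ := by ring

-- Jensen's inequality for `log`, written out with `log x ≤ x - 1`.
lemma neg_logPotential_le (z : ℂ) (hE : Bornology.IsBounded E) (hpos : 0 < volume.real E) :
    -logPotential E z ≤
      volume.real E * Real.log ((2 * Real.pi + volume.real E) / volume.real E) := by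
  set e := volume.real E
  set C := 2 * Real.pi + e
  have hfin : volume E ≠ ∞ := hE.measure_lt_top.ne
  have hC : 0 < C := by positivity
  have hinv := (integrableOn_inv_norm_sub z hfin).mul_const (e / C)
  have hconst : IntegrableOn (fun _ ↦ Real.log (C / e) - 1) E := integrableOn_const hfin
  calc -logPotential E z = ∫ ζ in E, -Real.log ‖z - ζ‖ := (integral_neg _).symm
    _ ≤ ∫ ζ in E, (‖z - ζ‖⁻¹ * (e / C) + (Real.log (C / e) - 1)) := by
        refine integral_mono_ae (integrableOn_log_norm_sub z hE).neg (hinv.add hconst) ?_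
        filter_upwards [ae_restrict_norm_sub_pos z E] with ζ hζ
        have key := Real.log_le_sub_one_of_pos (show 0 < ‖z - ζ‖⁻¹ * (e / C) by positivity)
        rw [Real.log_mul (by positivity) (by positivity), Real.log_inv, ← inv_div C e,
          Real.log_inv] at key
        rw [← inv_div C e]
        linarith
    _ = (∫ ζ in E, ‖z - ζ‖⁻¹) * (e / C) + e * (Real.log (C / e) - 1) := by
        rw [integral_add hinv hconst, integral_mul_const, setIntegral_const, smul_eq_mul]
    _ ≤ C * (e / C) + e * (Real.log (C / e) - 1) := by
        gcongr
        exact setIntegral_inv_norm_sub_le z hfin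
    _ = e * Real.log (C / e) := by
        field_simp
        ring

lemma logPotential_nonneg {z : ℂ} (hE : IsCompact E) (hdist : ∀ ζ ∈ E, 1 ≤ ‖z - ζ‖) :
    0 ≤ logPotential E z :=
  setIntegral_nonneg hE.measurableSet fun ζ hζ ↦ Real.log_nonneg (hdist ζ hζ)

lemma logPotential_le_mul_log {z : ℂ} {r : ℝ} (hE : IsCompact E)
    (hdist : ∀ ζ ∈ E, ‖z - ζ‖ ≤ r) : logPotential E z ≤ volume.real E * Real.log r := by
  rw [← smul_eq_mul, ← setIntegral_const]
  refine integral_mono_ae (integrableOn_log_norm_sub z hE.isBounded)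
    (integrableOn_const hE.measure_lt_top.ne) ?_
  filter_upwards [ae_restrict_norm_sub_pos z E, ae_restrict_mem hE.measurableSet] with ζ hpos hζ
  exact Real.log_le_log hpos (hdist ζ hζ)

lemma circleAverage_log_norm_sub_const_of_notMem_closedBall {c ζ : ℂ} {r : ℝ} (hr : 0 < r)
    (hζ : ζ ∉ Metric.closedBall c r) :
    Real.circleAverage (Real.log ‖· - ζ‖) c r = Real.log ‖c - ζ‖ := by
  have hlt : r < ‖c - ζ‖ := by simpa [dist_eq_norm, norm_sub_rev] using hζ
  have hpos : 0 < ‖c - ζ‖ := hr.trans hlt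
  have one_le : 1 ≤ |r⁻¹ * ‖c - ζ‖| := by
    rw [abs_of_pos (by positivity), ← div_eq_inv_mul, one_le_div hr]
    exact hlt.le
  rw [circleAverage_log_norm_sub_const_eq_log_radius_add_posLog hr.ne',
    Real.posLog_eq_log one_le, Real.log_mul (by positivity) hpos.ne', Real.log_inv]
  ring

lemma circleAverage_logPotential {c : ℂ} {r : ℝ} (hE : IsCompact E) (hr : 0 < r)
    (hdisj : Disjoint (Metric.closedBall c r) E) :
    Real.circleAverage (logPotential E) c r = logPotential E c := by
  have hcont : ContinuousOn (Function.uncurry fun (θ : ℝ) ζ ↦ Real.log ‖circleMap c r θ - ζ‖)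
      (Set.Icc 0 (2 * Real.pi) ×ˢ E) := by
    refine ContinuousOn.log (by have := continuous_circleMap c r; fun_prop) ?_
    rintro ⟨θ, ζ⟩ ⟨-, hζ⟩
    refine norm_ne_zero_iff.2 (sub_ne_zero.2 fun heq ↦ ?_)
    exact hdisj.ne_of_mem (circleMap_mem_closedBall c hr.le θ) hζ heq
  have hint : Integrable (Function.uncurry fun (θ : ℝ) ζ ↦ Real.log ‖circleMap c r θ - ζ‖)
      ((volume.restrict (Set.Ioc 0 (2 * Real.pi))).prod (volume.restrict E)) := by
    rw [Measure.prod_restrict]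
    exact (hcont.integrableOn_compact (isCompact_Icc.prod hE)).mono_set
      (Set.prod_mono Set.Ioc_subset_Icc_self subset_rfl)
  calc Real.circleAverage (logPotential E) c r
      = ∫ ζ in E, Real.circleAverage (Real.log ‖· - ζ‖) c r := by
        simp only [Real.circleAverage_def, logPotential,
          intervalIntegral.integral_of_le Real.two_pi_pos.le]
        rw [integral_integral_swap hint, integral_smul]
    _ = logPotential E c := setIntegral_congr_fun hE.measurableSet fun ζ hζ ↦
        circleAverage_log_norm_sub_const_of_notMem_closedBall hr
          fun hmem ↦ hdisj.ne_of_mem hmem hζ rfl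

end LogPotential

lemma circleAverage_norm_sq (c : ℂ) (r : ℝ) :
    Real.circleAverage (fun z ↦ ‖z‖ ^ 2) c r = ‖c‖ ^ 2 + r ^ 2 := by
  have expand (θ : ℝ) : ‖circleMap c r θ‖ ^ 2 =
      ‖c‖ ^ 2 + r ^ 2 + 2 * r * (c.re * Real.cos θ + c.im * Real.sin θ) := by
    simp only [← Complex.normSq_eq_norm_sq, Complex.normSq_apply, circleMap, Complex.exp_mul_I,
      ← Complex.ofReal_cos, ← Complex.ofReal_sin, Complex.add_re, Complex.add_im, Complex.mul_re,
      Complex.mul_im, Complex.ofReal_re, Complex.ofReal_im, Complex.I_re, Complex.I_im]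
    linear_combination r ^ 2 * Real.sin_sq_add_cos_sq θ
  have integral_trig :
      ∫ θ in 0..2 * Real.pi, (c.re * Real.cos θ + c.im * Real.sin θ) = 0 := by
    rw [intervalIntegral.integral_add (Continuous.intervalIntegrable (by fun_prop) _ _)
      (Continuous.intervalIntegrable (by fun_prop) _ _)]
    simp
  rw [Real.circleAverage_def]
  simp_rw [expand]
  rw [intervalIntegral.integral_add (by simp) (Continuous.intervalIntegrable (by fun_prop) _ _),
    intervalIntegral.integral_const_mul, integral_trig, intervalIntegral.integral_const, mul_zero,
    add_zero, sub_zero, inv_smul_smul₀ Real.two_pi_pos.ne']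

/-- Subharmonicity of a real-valued function on a planar set: upper semicontinuity together with
the sub-mean value inequality on every closed disc contained in the set. Circle integrability is
part of the definition so that the circle averages never take a junk value. -/
structure SubharmonicOn (v : ℂ → ℝ) (s : Set ℂ) : Prop where
  upperSemicontinuousOn : UpperSemicontinuousOn v s
  circleIntegrable {c : ℂ} {r : ℝ} (hr : 0 < r) (hsub : Metric.closedBall c r ⊆ s) :
    CircleIntegrable v c r
  le_circleAverage {c : ℂ} {r : ℝ} (hr : 0 < r) (hsub : Metric.closedBall c r ⊆ s) :
    v c ≤ Real.circleAverage v c r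

namespace SubharmonicOn

variable {v w : ℂ → ℝ} {s U K E : Set ℂ}

lemma mono (hv : SubharmonicOn v s) (hU : U ⊆ s) : SubharmonicOn v U where
  upperSemicontinuousOn := hv.upperSemicontinuousOn.mono hU
  circleIntegrable hr hsub := hv.circleIntegrable hr (hsub.trans hU)
  le_circleAverage hr hsub := hv.le_circleAverage hr (hsub.trans hU)

lemma add (hv : SubharmonicOn v s) (hw : SubharmonicOn w s) :
    SubharmonicOn (fun z ↦ v z + w z) s where
  upperSemicontinuousOn := hv.upperSemicontinuousOn.add hw.upperSemicontinuousOn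
  circleIntegrable hr hsub := (hv.circleIntegrable hr hsub).add (hw.circleIntegrable hr hsub)
  le_circleAverage hr hsub := by
    rw [Real.circleAverage_fun_add (hv.circleIntegrable hr hsub) (hw.circleIntegrable hr hsub)]
    exact add_le_add (hv.le_circleAverage hr hsub) (hw.le_circleAverage hr hsub)

lemma const_mul_logPotential (a : ℝ) (hE : IsCompact E) (hUE : Disjoint U E) :
    SubharmonicOn (fun z ↦ a * logPotential E z) U where
  upperSemicontinuousOn :=
    ((continuous_logPotential hE.isBounded).const_mul a).continuousOn.upperSemicontinuousOn
  circleIntegrable hr _ :=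
    ((continuous_logPotential hE.isBounded).const_mul a).continuousOn.circleIntegrable hr.le
  le_circleAverage hr hsub := by
    simp only [← smul_eq_mul]
    rw [Real.circleAverage_fun_smul, circleAverage_logPotential hE hr (hUE.mono_left hsub)]

lemma not_isMaxOn_add_mul_norm_sq (hv : SubharmonicOn v U) (hU : IsOpen U) {z : ℂ} (hz : z ∈ U)
    {ε : ℝ} (hε : 0 < ε) : ¬ IsMaxOn (fun z ↦ v z + ε * ‖z‖ ^ 2) U z := by
  intro hmax
  obtain ⟨r, hr, hsub⟩ := Metric.nhds_basis_closedBall.mem_iff.1 (hU.mem_nhds hz)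
  have hvint := hv.circleIntegrable hr hsub
  have hnint : CircleIntegrable (fun z : ℂ ↦ ε * ‖z‖ ^ 2) z r :=
    Continuous.continuousOn (by fun_prop) |>.circleIntegrable hr.le
  have average_norm_sq :
      Real.circleAverage (fun z ↦ ε * ‖z‖ ^ 2) z r = ε * (‖z‖ ^ 2 + r ^ 2) := by
    simp only [← smul_eq_mul]
    rw [Real.circleAverage_fun_smul, circleAverage_norm_sq]
  have average_le : Real.circleAverage (fun z ↦ v z + ε * ‖z‖ ^ 2) z r ≤ v z + ε * ‖z‖ ^ 2 :=
    Real.circleAverage_mono_on_of_le_circle (hvint.add hnint) fun x hx ↦ hmax <|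
      hsub (Metric.sphere_subset_closedBall (by rwa [abs_of_pos hr] at hx))
  rw [Real.circleAverage_fun_add hvint hnint, average_norm_sq] at average_le
  have := hv.le_circleAverage hr hsub
  have : 0 < ε * r ^ 2 := by positivity
  linarith

theorem le_of_forall_diff_le (hv : SubharmonicOn v U) (hU : IsOpen U) (hK : IsCompact K)
    (hUK : U ⊆ K) (husc : UpperSemicontinuousOn v K) {M : ℝ} (hM : ∀ z ∈ K \ U, v z ≤ M)
    {z : ℂ} (hz : z ∈ K) : v z ≤ M := by
  obtain ⟨R, hR, hKR⟩ := hK.isBounded.exists_pos_norm_le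
  refine le_of_forall_pos_le_add fun δ hδ ↦ ?_
  set ε := δ / R ^ 2
  have hε : 0 < ε := by positivity
  have husc' : UpperSemicontinuousOn (fun z ↦ v z + ε * ‖z‖ ^ 2) K :=
    husc.add (Continuous.continuousOn (by fun_prop)).upperSemicontinuousOn
  obtain ⟨z₀, hz₀, hmax⟩ := husc'.exists_isMaxOn ⟨z, hz⟩ hK
  have hz₀U : z₀ ∉ U := fun hmem ↦
    hv.not_isMaxOn_add_mul_norm_sq hU hmem hε (hmax.on_subset hUK)
  calc v z ≤ v z + ε * ‖z‖ ^ 2 := le_add_of_nonneg_right (by positivity)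
    _ ≤ v z₀ + ε * ‖z₀‖ ^ 2 := hmax hz
    _ ≤ M + ε * R ^ 2 := by
        gcongr
        exacts [hM z₀ ⟨hz₀, hz₀U⟩, hKR z₀ hz₀]
    _ = M + δ := by rw [div_mul_cancel₀ _ (by positivity)]

lemma le_mul_logPotential (hv : SubharmonicOn v U) (hU : IsOpen U) (hK : IsCompact K)
    (hUK : U ⊆ K) (husc : UpperSemicontinuousOn v K) (hE : IsCompact E) (hUE : Disjoint U E)
    {c : ℝ} (hle : ∀ z ∈ K \ U, v z ≤ c * logPotential E z) {z : ℂ} (hz : z ∈ K) :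
    v z ≤ c * logPotential E z := by
  have hcont : Continuous fun z ↦ -c * logPotential E z :=
    (continuous_logPotential hE.isBounded).const_mul _
  have := (hv.add (const_mul_logPotential (-c) hE hUE)).le_of_forall_diff_le hU hK hUK
    (husc.add hcont.continuousOn.upperSemicontinuousOn) (M := 0)
    (fun z hz ↦ by linarith [hle z hz]) hz
  linarith

-- `v` is compared with the multiple of `logPotential E` that is at least `-t` on `E`.
lemma mul_log_two_le (hv : SubharmonicOn v (Metric.closedBall 0 2))
    (hnonpos : ∀ z ∈ Metric.closedBall 0 2, v z ≤ 0) {t : ℝ} (ht : 0 ≤ t)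
    (hE : IsCompact E) (hEsub : E ⊆ Metric.closedBall 0 (1 / 2)) (hEt : ∀ z ∈ E, v z ≤ -t)
    (hEpos : 0 < volume.real E) :
    t * Real.log 2 ≤ -v 0 * Real.log ((2 * Real.pi + volume.real E) / volume.real E) := by
  set e := volume.real E
  set L := Real.log ((2 * Real.pi + e) / e)
  have hL : 0 < L := Real.log_pos ((one_lt_div hEpos).2 (by linarith [Real.pi_pos]))
  have hEnorm : ∀ ζ ∈ E, ‖ζ‖ ≤ 1 / 2 := fun ζ hζ ↦ by simpa using hEsub hζ
  set c := t / (e * L)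
  have hc : 0 ≤ c := by positivity
  have hle : ∀ z ∈ Metric.closedBall 0 2 \ (Metric.ball 0 2 \ E), v z ≤ c * logPotential E z := by
    rintro z ⟨hz2, hz⟩
    by_cases hzE : z ∈ E
    · calc v z ≤ -t := hEt z hzE
        _ = c * -(e * L) := by simp only [c]; field_simp
        _ ≤ c * logPotential E z := by
            gcongr
            linarith [neg_logPotential_le z hE.isBounded hEpos]
    · have hz_norm : 2 ≤ ‖z‖ := by
        by_contra! hlt
        exact hz ⟨by simpa using hlt, hzE⟩
      exact (hnonpos z hz2).trans <| mul_nonneg hc <| logPotential_nonneg hE fun ζ hζ ↦ by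
        linarith [norm_sub_norm_le z ζ, hEnorm ζ hζ]
  have hUK : Metric.ball (0 : ℂ) 2 \ E ⊆ Metric.closedBall 0 2 :=
    Set.sdiff_subset.trans Metric.ball_subset_closedBall
  have hv0 : v 0 ≤ c * logPotential E 0 :=
    (hv.mono hUK).le_mul_logPotential (Metric.isOpen_ball.sdiff hE.isClosed)
      (isCompact_closedBall 0 2) hUK hv.upperSemicontinuousOn hE disjoint_sdiff_self_left hle
      (by simp)
  have hpot : logPotential E 0 ≤ e * Real.log 2⁻¹ :=
    logPotential_le_mul_log hE fun ζ hζ ↦ by simpa using hEnorm ζ hζ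
  calc t * Real.log 2 = -(c * (e * Real.log 2⁻¹)) * L := by
        rw [Real.log_inv]
        simp only [c]
        field_simp
    _ ≤ -v 0 * L := by
        gcongr
        exact hv0.trans (by gcongr)

theorem measureReal_le_exp (hv : SubharmonicOn v (Metric.closedBall 0 2))
    (hnonpos : ∀ z ∈ Metric.closedBall 0 2, v z ≤ 0) {A t : ℝ} (hA : 0 < A) (hv0 : -A ≤ v 0)
    (ht : 0 ≤ t) (hE : IsCompact E) (hEsub : E ⊆ Metric.closedBall 0 (1 / 2))
    (hEt : ∀ z ∈ E, v z ≤ -t) :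
    volume.real E ≤ (2 * Real.pi + 1) * Real.exp (-(Real.log 2 / A) * t) := by
  rcases measureReal_nonneg.eq_or_lt with hzero | hpos
  · rw [← hzero]
    positivity
  set e := volume.real E
  have he : e ≤ 1 := by
    calc e ≤ volume.real (Metric.closedBall (0 : ℂ) (1 / 2)) :=
          measureReal_mono hEsub (isCompact_closedBall _ _).measure_lt_top.ne
      _ = Real.pi / 4 := by
          rw [measureReal_def, Complex.volume_closedBall]
          simp
          ring
      _ ≤ 1 := by linarith [Real.pi_le_four]
  have exponent_le : Real.log 2 / A * t ≤ Real.log ((2 * Real.pi + e) / e) := by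
    rw [div_mul_eq_mul_div, div_le_iff₀' hA, mul_comm (Real.log 2)]
    refine (hv.mul_log_two_le hnonpos ht hE hEsub hEt hpos).trans ?_
    gcongr
    · exact Real.log_nonneg ((one_le_div hpos).2 (by linarith [Real.pi_pos]))
    · linarith
  calc e = e * Real.exp (Real.log 2 / A * t) * Real.exp (-(Real.log 2 / A) * t) := by
        rw [mul_assoc, ← Real.exp_add]
        simp
    _ ≤ e * ((2 * Real.pi + e) / e) * Real.exp (-(Real.log 2 / A) * t) := by
        gcongr
        rwa [← Real.le_log_iff_exp_le (by positivity)]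
    _ = (2 * Real.pi + e) * Real.exp (-(Real.log 2 / A) * t) := by rw [mul_div_cancel₀ _ hpos.ne']
    _ ≤ (2 * Real.pi + 1) * Real.exp (-(Real.log 2 / A) * t) := by gcongr

end SubharmonicOn

section Semicontinuity

variable {X β : Type*} [TopologicalSpace X] [LinearOrder β] {f : X → β} {s : Set X}

lemma isOpen_inter_preimage_Iio (hf : UpperSemicontinuousOn f s) (hs : IsOpen s) (a : β) :
    IsOpen (s ∩ f ⁻¹' Set.Iio a) := by
  refine isOpen_iff_mem_nhds.2 fun x ⟨hx, hxa⟩ ↦ ?_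
  have hlt := hf x hx a hxa
  rw [hs.nhdsWithin_eq hx] at hlt
  exact inter_mem (hs.mem_nhds hx) hlt

lemma aemeasurable_restrict_of_upperSemicontinuousOn [TopologicalSpace β] [OrderTopology β]
    [SecondCountableTopology β] [MeasurableSpace β] [BorelSpace β] [MeasurableSpace X]
    [OpensMeasurableSpace X] {μ : Measure X} (hf : UpperSemicontinuousOn f s)
    (hs : MeasurableSet s) : AEMeasurable f (μ.restrict s) :=
  aemeasurable_restrict_of_measurable_subtype hs
    (upperSemicontinuousOn_univ_iff.1
      (hf.comp continuous_subtype_val.continuousOn fun x _ ↦ x.2)).measurable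

end Semicontinuity

lemma circleIntegrable_of_upperSemicontinuousOn {v : ℂ → ℝ} {c : ℂ} {r B : ℝ}
    (hv : UpperSemicontinuousOn v (Metric.sphere c |r|))
    (hB : ∀ z ∈ Metric.sphere c |r|, B ≤ v z) : CircleIntegrable v c r := by
  obtain ⟨M, hM⟩ := hv.bddAbove_of_isCompact (isCompact_sphere c |r|)
  have hmem (θ : ℝ) : circleMap c r θ ∈ Metric.sphere c |r| := circleMap_mem_sphere' c r θ
  have husc : UpperSemicontinuous fun θ ↦ v (circleMap c r θ) :=
    upperSemicontinuousOn_univ_iff.1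
      (hv.comp (continuous_circleMap c r).continuousOn fun θ _ ↦ hmem θ)
  refine intervalIntegrable_iff.2 <| Measure.integrableOn_of_bounded (M := max M (-B))
    (by rw [Real.volume_uIoc]; exact ENNReal.ofReal_ne_top) husc.measurable.aestronglyMeasurable
    (ae_of_all _ fun θ ↦ ?_)
  rw [Real.norm_eq_abs, abs_le]
  have h_upper : v (circleMap c r θ) ≤ M := hM ⟨_, hmem θ, rfl⟩
  have h_lower := hB _ (hmem θ)
  constructor
  · linarith [le_max_right M (-B)]
  · exact h_upper.trans (le_max_left _ _)

section Truncation

variable {m : ℕ} {x : EReal} {a : ℝ}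

lemma coe_erealTrunc (hx : x ≠ ⊤) :
    (ERealTrunc m x : EReal) = max x ((-(m : ℝ) : ℝ) : EReal) := by
  rw [ERealTrunc, ← EReal.coe_neg]
  exact EReal.coe_toReal (max_lt hx.lt_top (EReal.coe_lt_top _)).ne
    ((EReal.bot_lt_coe _).trans_le (le_max_right _ _)).ne'

lemma erealTrunc_lt_iff (hx : x ≠ ⊤) : ERealTrunc m x < a ↔ x < a ∧ -(m : ℝ) < a := by
  rw [← EReal.coe_lt_coe_iff, coe_erealTrunc hx, max_lt_iff, EReal.coe_lt_coe_iff]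

lemma erealTrunc_le_iff (hx : x ≠ ⊤) : ERealTrunc m x ≤ a ↔ x ≤ a ∧ -(m : ℝ) ≤ a := by
  rw [← EReal.coe_le_coe_iff, coe_erealTrunc hx, max_le_iff, EReal.coe_le_coe_iff]

lemma le_erealTrunc_iff (hx : x ≠ ⊤) : a ≤ ERealTrunc m x ↔ a ≤ x ∨ a ≤ -(m : ℝ) := by
  rw [← EReal.coe_le_coe_iff, coe_erealTrunc hx, le_max_iff, EReal.coe_le_coe_iff]

lemma upperSemicontinuousOn_erealTrunc {X : Type*} [TopologicalSpace X] {s : Set X}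
    {u : X → EReal} (hu : UpperSemicontinuousOn u s) (htop : ∀ y ∈ s, u y ≠ ⊤) (m : ℕ) :
    UpperSemicontinuousOn (fun y ↦ ERealTrunc m (u y)) s := by
  intro y hy a ha
  have ⟨hlt, hma⟩ := (erealTrunc_lt_iff (htop y hy)).1 ha
  filter_upwards [hu y hy a hlt, self_mem_nhdsWithin] with y' hlt' hy'
  exact (erealTrunc_lt_iff (htop y' hy')).2 ⟨hlt', hma⟩

end Truncation

namespace PlurisubharmonicOn

variable {n : ℕ} {D : Set (Fin n → ℂ)} {u : (Fin n → ℂ) → EReal}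

lemma exists_forall_le (hu : PlurisubharmonicOn u D) {K : Set (Fin n → ℂ)} (hK : IsCompact K)
    (hKD : K ⊆ D) : ∃ M : ℝ, ∀ z ∈ K, u z ≤ M := by
  rcases K.eq_empty_or_nonempty with rfl | hne
  · simp
  obtain ⟨z₀, hz₀, hmax⟩ := (hu.1.mono hKD).exists_isMaxOn hne hK
  exact ⟨(u z₀).toReal, fun z hz ↦ (hmax hz).trans (EReal.le_coe_toReal (hu.2.1 z₀ (hKD hz₀)))⟩

lemma aemeasurable_toReal (hu : PlurisubharmonicOn u D) {K : Set (Fin n → ℂ)} (hK : IsCompact K)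
    (hKD : K ⊆ D) : AEMeasurable (fun z ↦ (u z).toReal) (volume.restrict K) :=
  (aemeasurable_restrict_of_upperSemicontinuousOn (hu.1.mono hKD) hK.measurableSet).ereal_toReal

theorem subharmonicOn_slice (hu : PlurisubharmonicOn u D) (x w : Fin n → ℂ) (m : ℕ) :
    SubharmonicOn (fun s ↦ ERealTrunc m (u (x + s • w))) {s | x + s • w ∈ D} := by
  have husc : UpperSemicontinuousOn (fun s : ℂ ↦ ERealTrunc m (u (x + s • w)))
      {s | x + s • w ∈ D} :=
    (upperSemicontinuousOn_erealTrunc hu.1 hu.2.1 m).comp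
      (by fun_prop : Continuous fun s : ℂ ↦ x + s • w).continuousOn fun _ hs ↦ hs
  refine ⟨husc, fun {c r} hr hsub ↦ ?_, fun {c r} hr hsub ↦ ?_⟩
  · have hsphere : Metric.sphere c |r| ⊆ {s | x + s • w ∈ D} := by
      rw [abs_of_pos hr]
      exact Metric.sphere_subset_closedBall.trans hsub
    exact circleIntegrable_of_upperSemicontinuousOn (husc.mono hsphere)
      fun s hs ↦ (le_erealTrunc_iff (hu.2.1 _ (hsphere hs))).2 (Or.inr le_rfl)
  · have line_eq (τ : ℂ) : x + c • w + τ • (r : ℂ) • w = x + (c + τ * r) • w := by module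
    have hdisc (τ : ℂ) (hτ : ‖τ‖ ≤ 1) : x + c • w + τ • (r : ℂ) • w ∈ D := by
      rw [line_eq]
      refine hsub ?_
      rw [Metric.mem_closedBall, dist_eq_norm, add_sub_cancel_left, norm_mul, Complex.norm_real,
        Real.norm_eq_abs, abs_of_pos hr]
      exact mul_le_of_le_one_left hr.le hτ
    have hmean := hu.2.2 (x + c • w) (hsub (Metric.mem_closedBall_self hr.le)) _ hdisc m
    rw [Real.circleAverage_def, smul_eq_mul, ← div_eq_inv_mul, le_div_iff₀' Real.two_pi_pos]
    simpa only [line_eq, mul_comm, circleMap] using hmean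

theorem volume_slice_lt_le_exp (hu : PlurisubharmonicOn u D) {x w : Fin n → ℂ}
    (hdisc : ∀ s ∈ Metric.closedBall (0 : ℂ) 2, x + s • w ∈ D) {M A t : ℝ} (hM : 0 ≤ M)
    (huM : ∀ s ∈ Metric.closedBall (0 : ℂ) 2, u (x + s • w) ≤ M) (hA : 0 < A)
    (huA : ((-A : ℝ) : EReal) ≤ u x) (ht : 0 ≤ t) :
    volume {s ∈ Metric.ball (0 : ℂ) (1 / 2) | u (x + s • w) < ((-t : ℝ) : EReal)} ≤
      ENNReal.ofReal ((2 * Real.pi + 1) * Real.exp (-(Real.log 2 / (A + M)) * t)) := by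
  set S := {s ∈ Metric.ball (0 : ℂ) (1 / 2) | u (x + s • w) < ((-t : ℝ) : EReal)}
  have hball : Metric.ball (0 : ℂ) (1 / 2) ⊆ Metric.closedBall 0 2 :=
    Metric.ball_subset_closedBall.trans (Metric.closedBall_subset_closedBall (by norm_num))
  have hSopen : IsOpen S :=
    isOpen_inter_preimage_Iio (f := fun s : ℂ ↦ u (x + s • w))
      (hu.1.comp (by fun_prop : Continuous fun s : ℂ ↦ x + s • w).continuousOn
        fun s hs ↦ hdisc s (hball hs)) Metric.isOpen_ball _
  obtain ⟨m, hm⟩ := exists_nat_ge t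
  set v : ℂ → ℝ := fun s ↦ ERealTrunc m (u (x + s • w)) + -M
  have hconst : SubharmonicOn (fun _ ↦ -M) (Metric.closedBall 0 2) :=
    ⟨upperSemicontinuousOn_const, fun _ _ ↦ circleIntegrable_const _ _ _,
      fun _ _ ↦ (Real.circleAverage_const _ _ _).ge⟩
  have hv : SubharmonicOn v (Metric.closedBall 0 2) :=
    ((hu.subharmonicOn_slice x w m).mono hdisc).add hconst
  have hv_nonpos : ∀ s ∈ Metric.closedBall 0 2, v s ≤ 0 := fun s hs ↦ by
    have := (erealTrunc_le_iff (m := m) (hu.2.1 _ (hdisc s hs))).2 ⟨huM s hs, by linarith⟩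
    simpa [v] using this
  have hv_zero : -(A + M) ≤ v 0 := by
    have h0 : x + (0 : ℂ) • w = x := by simp
    have hxD : x ∈ D := h0 ▸ hdisc 0 (by simp)
    simp only [v, h0]
    linarith [(le_erealTrunc_iff (m := m) (hu.2.1 x hxD)).2 (Or.inl huA)]
  rw [hSopen.measure_eq_iSup_isCompact]
  refine iSup₂_le fun E hES ↦ iSup_le fun hE ↦ ?_
  have hEv : ∀ s ∈ E, v s ≤ -t := fun s hs ↦ by
    have := (erealTrunc_le_iff (m := m) (hu.2.1 _ (hdisc s (hball (hES hs).1)))).2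
      ⟨(hES hs).2.le, neg_le_neg hm⟩
    simp only [v]
    linarith
  rw [← ofReal_measureReal hE.measure_lt_top.ne]
  exact ENNReal.ofReal_le_ofReal <| hv.measureReal_le_exp hv_nonpos (by linarith) hv_zero ht hE
    (hES.trans fun s hs ↦ Metric.ball_subset_closedBall hs.1) hEv

end PlurisubharmonicOn

section SliceMeasure

variable {V : Type*} [NormedAddCommGroup V] [MeasurableSpace V] [BorelSpace V]

lemma abs_det_le_one_of_forall_norm_le [NormedSpace ℝ V] [FiniteDimensional ℝ V] (f : V →ₗ[ℝ] V)
    (hf : ∀ w, ‖f w‖ ≤ ‖w‖) : |LinearMap.det f| ≤ 1 := by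
  have hmaps : f '' Metric.ball 0 1 ⊆ Metric.ball 0 1 := by
    rintro _ ⟨w, hw, rfl⟩
    rw [mem_ball_zero_iff] at hw ⊢
    exact (hf w).trans_lt hw
  have hle := measure_mono (μ := (Measure.addHaar : Measure V)) hmaps
  rw [Measure.addHaar_image_linearMap] at hle
  have hpos := Metric.measure_ball_pos (Measure.addHaar : Measure V) 0 one_pos
  rw [← ENNReal.ofReal_le_one, ← ENNReal.mul_le_mul_iff_left hpos.ne' measure_ball_lt_top.ne,
    one_mul]
  exact hle

variable [NormedSpace ℂ V] [FiniteDimensional ℂ V] (μ : Measure V) [μ.IsAddHaarMeasure]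

lemma measure_le_measure_preimage_add_smul {s : ℂ} (hs₀ : s ≠ 0) (hs₁ : ‖s‖ ≤ 1) (x : V)
    (E : Set V) : μ E ≤ μ ((fun w ↦ x + s • w) ⁻¹' E) := by
  let f : V →ₗ[ℝ] V := (LinearMap.lsmul ℂ V s).restrictScalars ℝ
  have himage : f '' ((fun w ↦ x + s • w) ⁻¹' E) = (x + ·) ⁻¹' E :=
    Set.image_preimage_eq ((x + ·) ⁻¹' E) fun w ↦ ⟨s⁻¹ • w, smul_inv_smul₀ hs₀ w⟩
  rw [← measure_preimage_add μ x E, ← himage, Measure.addHaar_image_linearMap]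
  refine mul_le_of_le_one_left' (ENNReal.ofReal_le_one.2 ?_)
  exact abs_det_le_one_of_forall_norm_le f fun w ↦
    (norm_smul s w).trans_le (mul_le_of_le_one_left (norm_nonneg w) hs₁)

theorem measure_mul_volume_le_of_forall_slice_le {δ ρ : ℝ} (hδ : 0 < δ) {x : V} {E : Set V}
    (hE : MeasurableSet E) (hEx : E ⊆ Metric.ball x (δ * ρ)) {A : Set ℂ} (hA : MeasurableSet A)
    (hAδ : ∀ s ∈ A, δ ≤ ‖s‖ ∧ ‖s‖ ≤ 1) {η : ℝ≥0∞}
    (hslice : ∀ w ∈ Metric.ball (0 : V) ρ, volume {s ∈ A | x + s • w ∈ E} ≤ η) :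
    μ E * volume A ≤ η * μ (Metric.ball 0 ρ) := by
  have : ProperSpace V := FiniteDimensional.proper ℂ V
  let S : Set (V × ℂ) := {q | q.1 ∈ Metric.ball 0 ρ ∧ q.2 ∈ A ∧ x + q.2 • q.1 ∈ E}
  have hS : MeasurableSet S :=
    (measurable_fst measurableSet_ball).inter <| (measurable_snd hA).inter <|
      (by fun_prop : Measurable fun q : V × ℂ ↦ x + q.2 • q.1) hE
  have hsub (s : ℂ) (hs : s ∈ A) : (fun w ↦ x + s • w) ⁻¹' E ⊆ (fun w ↦ (w, s)) ⁻¹' S := by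
    intro w hw
    refine ⟨?_, hs, hw⟩
    have hsw : ‖s‖ * ‖w‖ < δ * ρ := by simpa [norm_smul] using hEx hw
    have := mul_le_mul_of_nonneg_right (hAδ s hs).1 (norm_nonneg w)
    exact mem_ball_zero_iff.2 (lt_of_mul_lt_mul_left (this.trans_lt hsw) hδ.le)
  calc μ E * volume A
    _ = ∫⁻ _ in A, μ E := (setLIntegral_const _ _).symm
    _ ≤ ∫⁻ s in A, μ ((fun w ↦ (w, s)) ⁻¹' S) := setLIntegral_mono' hA fun s hs ↦
        (measure_le_measure_preimage_add_smul μ (norm_pos_iff.1 (hδ.trans_le (hAδ s hs).1))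
          (hAδ s hs).2 x E).trans (measure_mono (hsub s hs))
    _ ≤ ∫⁻ s, μ ((fun w ↦ (w, s)) ⁻¹' S) := setLIntegral_le_lintegral _ _
    _ = μ.prod volume S := (Measure.prod_apply_symm hS).symm
    _ = ∫⁻ w, volume (Prod.mk w ⁻¹' S) ∂μ := Measure.prod_apply hS
    _ ≤ ∫⁻ w, (Metric.ball (0 : V) ρ).indicator (fun _ ↦ η) w ∂μ := lintegral_mono fun w ↦ by
        by_cases hw : w ∈ Metric.ball (0 : V) ρ
        · rw [Set.indicator_of_mem hw]
          exact (measure_mono fun s hs ↦ hs.2).trans (hslice w hw)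
        · have hempty : Prod.mk w ⁻¹' S = ∅ := Set.eq_empty_of_forall_notMem fun s hs ↦ hw hs.1
          rw [hempty, measure_empty]
          exact zero_le
    _ = η * μ (Metric.ball 0 ρ) := lintegral_indicator_const measurableSet_ball _

end SliceMeasure

theorem PlurisubharmonicOn.volume_lt_mul_volume_ball_le {n : ℕ} {D : Set (Fin n → ℂ)}
    {u : (Fin n → ℂ) → EReal} (hu : PlurisubharmonicOn u D) {x : Fin n → ℂ} {ρ M A t : ℝ}
    (hD : Metric.closedBall x (2 * ρ) ⊆ D) (hM : 0 ≤ M)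
    (huM : ∀ y ∈ Metric.closedBall x (2 * ρ), u y ≤ M) (hA : 0 < A)
    (huA : ((-A : ℝ) : EReal) ≤ u x) (ht : 0 ≤ t) :
    volume {y ∈ Metric.ball x (1 / 4 * ρ) | u y < ((-t : ℝ) : EReal)} *
        volume (Metric.ball (3 / 8 : ℂ) (1 / 8)) ≤
      ENNReal.ofReal ((2 * Real.pi + 1) * Real.exp (-(Real.log 2 / (A + M)) * t)) *
        volume (Metric.ball (0 : Fin n → ℂ) ρ) := by
  have hsub : Metric.ball x (1 / 4 * ρ) ⊆ D := fun y hy ↦ hD <| Metric.mem_closedBall.2 <| by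
    linarith [Metric.mem_ball.1 hy, dist_nonneg (x := y) (y := x)]
  have hnorm : ∀ s ∈ Metric.ball (3 / 8 : ℂ) (1 / 8), 1 / 4 < ‖s‖ ∧ ‖s‖ < 1 / 2 := fun s hs ↦ by
    have hdist : |‖s‖ - ‖(3 / 8 : ℂ)‖| < 1 / 8 :=
      (abs_norm_sub_norm_le _ _).trans_lt (mem_ball_iff_norm.1 hs)
    rw [show ‖(3 / 8 : ℂ)‖ = 3 / 8 by norm_num, abs_lt] at hdist
    constructor <;> linarith
  refine measure_mul_volume_le_of_forall_slice_le volume (by norm_num)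
    (isOpen_inter_preimage_Iio (hu.1.mono hsub) Metric.isOpen_ball _).measurableSet
    Set.inter_subset_left measurableSet_ball
    (fun s hs ↦ ⟨(hnorm s hs).1.le, by linarith [(hnorm s hs).2]⟩) fun w hw ↦ ?_
  have hline : ∀ s ∈ Metric.closedBall (0 : ℂ) 2, x + s • w ∈ Metric.closedBall x (2 * ρ) := by
    intro s hs
    rw [mem_closedBall_iff_norm, add_sub_cancel_left, norm_smul]
    exact mul_le_mul (mem_closedBall_zero_iff.1 hs) (mem_ball_zero_iff.1 hw).le (norm_nonneg w)
      zero_le_two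
  refine le_trans (measure_mono fun s hs ↦ ?_) <|
    hu.volume_slice_lt_le_exp (fun s hs ↦ hD (hline s hs)) hM (fun s hs ↦ huM _ (hline s hs)) hA
      huA ht
  exact ⟨mem_ball_zero_iff.2 (hnorm s hs.1).2, hs.2.2⟩

section NonCollapsing

variable {ι α : Type*} [TopologicalSpace α] {u : ι → α → EReal} {l : Filter ι}

/-- The functions `u j` do not tend to `-∞` locally uniformly near `a`: along `l`, each
neighbourhood of `a` contains points where they stay bounded from below. -/
def NonCollapsingAt (u : ι → α → EReal) (l : Filter ι) (a : α) : Prop :=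
  ∀ W ∈ nhds a, ∃ A : ℝ, ∀ᶠ j in l, ∃ x ∈ W, ((-A : ℝ) : EReal) ≤ u j x

lemma isClosed_setOf_nonCollapsingAt : IsClosed {a | NonCollapsingAt u l a} := by
  refine isClosed_of_closure_subset fun a ha W hW ↦ ?_
  obtain ⟨b, hbW, hb⟩ := mem_closure_iff_nhds.1 ha _ (interior_mem_nhds.2 hW)
  exact hb W (mem_interior_iff_mem_nhds.1 hbW)

end NonCollapsing

section ExpTails

variable {ι α : Type*} {u : ι → α → EReal} {l : Filter ι} [MeasurableSpace α] {μ ν : Measure α}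

/-- The negative parts of the functions `u j` have exponentially decaying tails with respect to
`μ`, with constants that are eventually independent of `j` along `l`. -/
def HasUniformExpTails (u : ι → α → EReal) (l : Filter ι) (μ : Measure α) : Prop :=
  ∃ C c : ℝ, 0 < c ∧ ∀ᶠ j in l, ∀ t : ℝ, 0 ≤ t →
    μ {y | u j y < ((-t : ℝ) : EReal)} ≤ ENNReal.ofReal (C * Real.exp (-(c * t)))

lemma tendsto_ofReal_mul_exp_neg_mul_atTop (C : ℝ) {c : ℝ} (hc : 0 < c) :
    Tendsto (fun t ↦ ENNReal.ofReal (C * Real.exp (-(c * t)))) atTop (nhds 0) := by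
  have hexp : Tendsto (fun t ↦ Real.exp (-(c * t))) atTop (nhds 0) :=
    Real.tendsto_exp_neg_atTop_nhds_zero.comp (tendsto_id.const_mul_atTop hc)
  simpa using ENNReal.tendsto_ofReal (hexp.const_mul C)

namespace HasUniformExpTails

lemma zero : HasUniformExpTails u l (0 : Measure α) := ⟨0, 1, one_pos, by simp⟩

lemma mono (h : HasUniformExpTails u l ν) (hμν : μ ≤ ν) : HasUniformExpTails u l μ := by
  obtain ⟨C, c, hc, h⟩ := h
  exact ⟨C, c, hc, h.mono fun j hj t ht ↦ (hμν _).trans (hj t ht)⟩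

lemma add (hμ : HasUniformExpTails u l μ) (hν : HasUniformExpTails u l ν) :
    HasUniformExpTails u l (μ + ν) := by
  obtain ⟨C₁, c₁, hc₁, h₁⟩ := hμ
  obtain ⟨C₂, c₂, hc₂, h₂⟩ := hν
  have hle {C c t : ℝ} (hc : min c₁ c₂ ≤ c) (ht : 0 ≤ t) :
      ENNReal.ofReal (C * Real.exp (-(c * t))) ≤
        ENNReal.ofReal (|C| * Real.exp (-(min c₁ c₂ * t))) := by
    gcongr
    exact le_abs_self C
  refine ⟨|C₁| + |C₂|, min c₁ c₂, lt_min hc₁ hc₂, ?_⟩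
  filter_upwards [h₁, h₂] with j hj₁ hj₂ t ht
  rw [Measure.add_apply, add_mul, ENNReal.ofReal_add (by positivity) (by positivity)]
  exact add_le_add ((hj₁ t ht).trans (hle (min_le_left _ _) ht))
    ((hj₂ t ht).trans (hle (min_le_right _ _) ht))

lemma eventually_ae_ne_bot (h : HasUniformExpTails u l μ) : ∀ᶠ j in l, ∀ᵐ y ∂μ, u j y ≠ ⊥ := by
  obtain ⟨C, c, hc, h⟩ := h
  filter_upwards [h] with j hj
  have hle : μ {y | u j y = ⊥} ≤ 0 := by
    refine ge_of_tendsto (tendsto_ofReal_mul_exp_neg_mul_atTop C hc) ?_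
    filter_upwards [eventually_ge_atTop 0] with t ht
    exact (measure_mono fun y (hy : u j y = ⊥) ↦ hy.trans_lt (EReal.bot_lt_coe _)).trans (hj t ht)
  simpa [ae_iff] using hle

lemma nonCollapsingAt [TopologicalSpace α] {a : α} (h : HasUniformExpTails u l μ)
    (ha : ∀ W ∈ nhds a, 0 < μ W) : NonCollapsingAt u l a := by
  obtain ⟨C, c, hc, h⟩ := h
  intro W hW
  obtain ⟨t, htW, ht⟩ := (((tendsto_ofReal_mul_exp_neg_mul_atTop C hc).eventually_lt_const
    (ha W hW)).and (eventually_ge_atTop 0)).exists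
  refine ⟨t, h.mono fun j hj ↦ ?_⟩
  by_contra! hlt
  exact htW.not_ge ((measure_mono hlt).trans (hj t ht))

end HasUniformExpTails

theorem exists_eventually_frequently_ae_le_of_tendstoInMeasure [NeZero μ] {f : α → ℝ}
    (hu : ∀ j, ∀ᵐ y ∂μ, u j y ≠ ⊥)
    (hconv : TendstoInMeasure μ (fun j y ↦ (u j y).toReal) l f) :
    ∃ A : ℝ, ∀ᶠ j in l, ∃ᶠ y in ae μ, ((-A : ℝ) : EReal) ≤ u j y := by
  have hcover : ⋃ k : ℕ, {y | -(k : ℝ) ≤ f y} = Set.univ := Set.eq_univ_of_forall fun y ↦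
    have ⟨k, hk⟩ := exists_nat_ge (-f y)
    Set.mem_iUnion.2 ⟨k, neg_le.1 hk⟩
  obtain ⟨k, hk⟩ := exists_measure_pos_of_not_measure_iUnion_null
    (hcover ▸ (NeZero.ne (μ Set.univ)))
  refine ⟨k + 1, ?_⟩
  filter_upwards [(hconv 1 one_pos).eventually_lt_const hk] with j hj hfreq
  refine hj.not_ge (measure_mono_ae ?_)
  filter_upwards [hfreq, hu j] with y hlt hbot hfy
  have hlt_real : (u j y).toReal < -(k + 1) := by
    rw [← EReal.coe_lt_coe_iff, EReal.coe_toReal (not_le.1 hlt).ne_top hbot]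
    exact not_le.1 hlt
  have hdist : 1 ≤ dist (u j y).toReal (f y) := by
    rw [dist_comm, Real.dist_eq]
    exact le_trans (by linarith [show -(k : ℝ) ≤ f y from hfy]) (le_abs_self _)
  change 1 ≤ edist _ _
  rw [edist_dist]
  exact ENNReal.one_le_ofReal.2 hdist

end ExpTails

section Propagation

variable {n : ℕ} {ι : Type*} {l : Filter ι} {D : Set (Fin n → ℂ)} {u : ι → (Fin n → ℂ) → EReal}

theorem NonCollapsingAt.exists_hasUniformExpTails {a : Fin n → ℂ} (h : NonCollapsingAt u l a)
    (hD : D ∈ nhds a) (hu : ∀ j, PlurisubharmonicOn (u j) D)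
    (hbdd : ∀ K ⊆ D, IsCompact K → ∃ M : ℝ, ∀ j, ∀ z ∈ K, u j z ≤ M) :
    ∃ W ∈ nhds a, HasUniformExpTails u l (volume.restrict W) := by
  obtain ⟨R, hR, hRD⟩ := Metric.nhds_basis_closedBall.mem_iff.1 hD
  obtain ⟨M, hM⟩ := hbdd _ hRD (isCompact_closedBall a R)
  obtain ⟨r, rfl⟩ : ∃ r, R = 24 * r := ⟨R / 24, by ring⟩
  have hr₀ : 0 < r := by linarith
  obtain ⟨A, hA⟩ := h _ (Metric.ball_mem_nhds a hr₀)
  set N := volume (Metric.ball (3 / 8 : ℂ) (1 / 8))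
  have hN₀ : N ≠ 0 := (Metric.measure_ball_pos volume _ (by norm_num)).ne'
  set B := volume (Metric.ball (0 : Fin n → ℂ) (8 * r))
  have hBN : B / N ≠ ⊤ := ENNReal.div_ne_top measure_ball_lt_top.ne hN₀
  refine ⟨Metric.ball a r, Metric.ball_mem_nhds a hr₀,
    (B / N).toReal * (2 * Real.pi + 1), Real.log 2 / (max A 1 + max M 0),
    div_pos (Real.log_pos one_lt_two) (by positivity), ?_⟩
  filter_upwards [hA] with j ⟨x, hx, hxA⟩ t ht
  rw [Metric.mem_ball] at hx
  have hball : Metric.closedBall x (2 * (8 * r)) ⊆ Metric.closedBall a (24 * r) :=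
    Metric.closedBall_subset_closedBall' (by linarith)
  have key := (hu j).volume_lt_mul_volume_ball_le (hball.trans hRD) (le_max_right M 0)
    (fun y hy ↦ (hM j y (hball hy)).trans (EReal.coe_le_coe (le_max_left M 0)))
    (lt_max_of_lt_right (b := A) one_pos)
    (le_trans (EReal.coe_le_coe (neg_le_neg (le_max_left A 1))) hxA) ht
  have hsub : Metric.ball a r ⊆ Metric.ball x (1 / 4 * (8 * r)) :=
    Metric.ball_subset_ball' (by rw [dist_comm]; linarith)
  have hset : {y | u j y < ((-t : ℝ) : EReal)} ∩ Metric.ball a r ⊆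
      {y ∈ Metric.ball x (1 / 4 * (8 * r)) | u j y < ((-t : ℝ) : EReal)} :=
    fun y hy ↦ ⟨hsub hy.2, hy.1⟩
  rw [Measure.restrict_apply' measurableSet_ball, mul_assoc,
    ENNReal.ofReal_mul ENNReal.toReal_nonneg, ENNReal.ofReal_toReal hBN, mul_comm, ← mul_div_assoc,
    ← neg_mul]
  exact (measure_mono hset).trans
    ((ENNReal.le_div_iff_mul_le (.inl hN₀) (.inl measure_ball_lt_top.ne)).2 key)

theorem hasUniformExpTails_restrict_of_isCompact (hD : IsOpen D) (hconn : IsPreconnected D)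
    (hu : ∀ j, PlurisubharmonicOn (u j) D)
    (hbdd : ∀ K ⊆ D, IsCompact K → ∃ M : ℝ, ∀ j, ∀ z ∈ K, u j z ≤ M)
    (h : ∃ a ∈ D, NonCollapsingAt u l a) {K : Set (Fin n → ℂ)} (hK : IsCompact K) (hKD : K ⊆ D) :
    HasUniformExpTails u l (volume.restrict K) := by
  set S := {a | ∃ W ∈ nhds a, HasUniformExpTails u l (volume.restrict W)}
  have hS_open : IsOpen S := isOpen_iff_mem_nhds.2 fun a ⟨W, hW, hWu⟩ ↦
    (eventually_mem_nhds_iff.2 hW).mono fun b hb ↦ ⟨W, hb, hWu⟩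
  have hS_of_nonCollapsing {a} (haD : a ∈ D) (ha : NonCollapsingAt u l a) : a ∈ S :=
    ha.exists_hasUniformExpTails (hD.mem_nhds haD) hu hbdd
  have hS_nonCollapsing : S ⊆ {a | NonCollapsingAt u l a} := fun a ⟨W, hW, hWu⟩ ↦
    hWu.nonCollapsingAt fun W' hW' ↦
      (Measure.measure_pos_of_mem_nhds volume (inter_mem hW' hW)).trans_le
        (Measure.le_restrict_apply _ _)
  have hDS : D ⊆ S := by
    obtain ⟨a, haD, ha⟩ := h
    refine hconn.subset_of_closure_inter_subset hS_open ⟨a, haD, hS_of_nonCollapsing haD ha⟩ ?_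
    exact fun b hb ↦ hS_of_nonCollapsing hb.2
      (isClosed_setOf_nonCollapsingAt.closure_subset_iff.2 hS_nonCollapsing hb.1)
  refine hK.induction_on (p := fun s ↦ HasUniformExpTails u l (volume.restrict s)) ?_
    (fun s t hst ht ↦ ht.mono (Measure.restrict_mono_set _ hst))
    (fun s t hs ht ↦ (hs.add ht).mono (Measure.restrict_union_le s t))
    fun a ha ↦ ?_
  · rw [Measure.restrict_empty]
    exact .zero
  · obtain ⟨W, hW, hWu⟩ := hDS (hKD ha)
    exact ⟨W, mem_nhdsWithin_of_mem_nhds hW, hWu⟩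

theorem PlurisubharmonicOn.ae_ne_bot {v : (Fin n → ℂ) → EReal} (hv : PlurisubharmonicOn v D)
    (hD : IsOpen D) (hconn : IsPreconnected D) (hne : ∃ z ∈ D, v z ≠ ⊥) {K : Set (Fin n → ℂ)}
    (hK : IsCompact K) (hKD : K ⊆ D) : ∀ᵐ y ∂volume.restrict K, v y ≠ ⊥ := by
  obtain ⟨z, hzD, hz⟩ := hne
  have hz' : NonCollapsingAt (fun _ : Unit ↦ v) ⊤ z := fun W hW ↦
    ⟨-(v z).toReal, .of_forall fun _ ↦ ⟨z, mem_of_mem_nhds hW, by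
      rw [neg_neg, EReal.coe_toReal (hv.2.1 z hzD) hz]⟩⟩
  have htails := hasUniformExpTails_restrict_of_isCompact hD hconn (fun _ ↦ hv)
    (fun K hKD hK ↦ (hv.exists_forall_le hK hKD).imp fun M hM _ ↦ hM) ⟨z, hzD, hz'⟩ hK hKD
  exact htails.eventually_ae_ne_bot.exists.choose_spec

theorem nonCollapsingAt_of_tendstoInMeasure {f : (Fin n → ℂ) → ℝ} (hD : IsOpen D)
    (hconn : IsPreconnected D) (hu : ∀ j, PlurisubharmonicOn (u j) D)
    (hne : ∀ j, ∃ z ∈ D, u j z ≠ ⊥)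
    (hconv : ∀ K ⊆ D, IsCompact K →
      TendstoInMeasure (volume.restrict K) (fun j y ↦ (u j y).toReal) l f)
    {a : Fin n → ℂ} (ha : a ∈ D) : NonCollapsingAt u l a := by
  intro W hW
  obtain ⟨R, hR, hRW⟩ := Metric.nhds_basis_closedBall.mem_iff.1 (inter_mem hW (hD.mem_nhds ha))
  rw [Set.subset_inter_iff] at hRW
  have hB : IsCompact (Metric.closedBall a R) := isCompact_closedBall a R
  have : NeZero (volume.restrict (Metric.closedBall a R)) :=
    ⟨Measure.restrict_eq_zero.not.2 (Metric.measure_closedBall_pos volume a hR).ne'⟩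
  obtain ⟨A, hA⟩ := exists_eventually_frequently_ae_le_of_tendstoInMeasure
    (fun j ↦ (hu j).ae_ne_bot hD hconn (hne j) hB hRW.2) (hconv _ hRW.2 hB)
  refine ⟨A, hA.mono fun j hj ↦ ?_⟩
  obtain ⟨x, hxA, hxB⟩ := (hj.and_eventually (ae_restrict_mem hB.measurableSet)).exists
  exact ⟨x, hRW.1 hxB, hxA⟩

end Propagation

section Moments

variable {α E : Type*} [MeasurableSpace α] {μ : Measure α} [NormedAddCommGroup E]

theorem eLpNorm_le_of_measure_lt_norm_le_exp {f : α → E} (hf : AEStronglyMeasurable f μ)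
    {C c q : ℝ} (hc : 0 < c) (hq : 0 < q)
    (h : ∀ t, 0 < t → μ {y | t < ‖f y‖} ≤ ENNReal.ofReal (C * Real.exp (-(c * t)))) :
    eLpNorm f (ENNReal.ofReal q) μ ≤
      ENNReal.ofReal (q * (C * ((1 / c) ^ q * Real.Gamma q))) ^ (1 / q) := by
  have hint : IntegrableOn (fun t ↦ t ^ (q - 1) * Real.exp (-(c * t))) (Set.Ioi 0) := by
    simpa using integrableOn_rpow_mul_exp_neg_mul_rpow (s := q - 1) (by linarith) one_pos hc
  have hGamma : ∫⁻ t in Set.Ioi 0, ENNReal.ofReal (t ^ (q - 1) * Real.exp (-(c * t))) =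
      ENNReal.ofReal ((1 / c) ^ q * Real.Gamma q) := by
    rw [← Real.integral_rpow_mul_exp_neg_mul_Ioi hq hc, ofReal_integral_eq_lintegral_ofReal hint]
    filter_upwards [ae_restrict_mem measurableSet_Ioi] with t ht
    exact mul_nonneg (Real.rpow_nonneg (le_of_lt ht) _) (Real.exp_nonneg _)
  rw [eLpNorm_eq_lintegral_rpow_enorm_toReal (ENNReal.ofReal_pos.2 hq).ne' ENNReal.ofReal_ne_top,
    ENNReal.toReal_ofReal hq.le]
  refine ENNReal.rpow_le_rpow ?_ (by positivity)
  calc ∫⁻ y, ‖f y‖ₑ ^ q ∂μ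
    _ = ∫⁻ y, ENNReal.ofReal (‖f y‖ ^ q) ∂μ := lintegral_congr fun y ↦ by
        rw [← ofReal_norm, ENNReal.ofReal_rpow_of_nonneg (norm_nonneg _) hq.le]
    _ = ENNReal.ofReal q *
          ∫⁻ t in Set.Ioi 0, μ {y | t < ‖f y‖} * ENNReal.ofReal (t ^ (q - 1)) :=
        lintegral_rpow_eq_lintegral_meas_lt_mul μ (ae_of_all _ fun y ↦ norm_nonneg _)
          hf.norm.aemeasurable hq
    _ ≤ ENNReal.ofReal q * ∫⁻ t in Set.Ioi 0,
          ENNReal.ofReal C * ENNReal.ofReal (t ^ (q - 1) * Real.exp (-(c * t))) := by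
        refine mul_le_mul_right (setLIntegral_mono' measurableSet_Ioi fun t ht ↦ ?_) _
        have hexp : ENNReal.ofReal (C * Real.exp (-(c * t))) =
          ENNReal.ofReal C * ENNReal.ofReal (Real.exp (-(c * t))) :=
          ENNReal.ofReal_mul' (Real.exp_nonneg _)
        rw [ENNReal.ofReal_mul' (Real.exp_nonneg _), mul_comm (ENNReal.ofReal (t ^ (q - 1))),
          ← mul_assoc, ← hexp]
        exact mul_le_mul_left (h t ht) _
    _ = ENNReal.ofReal (q * (C * ((1 / c) ^ q * Real.Gamma q))) := by
        rw [lintegral_const_mul' _ _ ENNReal.ofReal_ne_top, hGamma,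
          ← ENNReal.ofReal_mul' (mul_nonneg (by positivity) (Real.Gamma_pos_of_pos hq).le),
          ENNReal.ofReal_mul hq.le]

theorem unifIntegrable_of_forall_eLpNorm_le {ι : Type*} {f : ι → α → E} {p q : ℝ≥0∞} (hp : p ≠ 0)
    (hpq : p < q) (hf : ∀ i, AEStronglyMeasurable (f i) μ) {C : ℝ≥0∞} (hC : C ≠ ⊤)
    (hfC : ∀ i, eLpNorm (f i) q μ ≤ C) : UnifIntegrable f p μ := by
  have hexp : 0 < 1 / p.toReal - 1 / q.toReal := by
    rw [sub_pos, ← ENNReal.toReal_one, ← ENNReal.toReal_div, ← ENNReal.toReal_div,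
      ENNReal.toReal_lt_toReal (by simp [(pos_of_gt hpq).ne']) (by simp [hp])]
    simpa using hpq
  intro ε hε
  have htendsto : Tendsto (fun δ : ℝ ↦ C * ENNReal.ofReal δ ^ (1 / p.toReal - 1 / q.toReal))
      (nhdsWithin 0 (Set.Ioi 0)) (nhds 0) := by
    have hpow := (ENNReal.continuous_rpow_const (y := 1 / p.toReal - 1 / q.toReal)).comp
      ENNReal.continuous_ofReal
    have hzero := ENNReal.Tendsto.const_mul (hpow.tendsto 0) (.inr hC)
    simp only [Function.comp_apply, ENNReal.ofReal_zero, ENNReal.zero_rpow_of_pos hexp,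
      mul_zero] at hzero
    exact hzero.mono_left nhdsWithin_le_nhds
  obtain ⟨δ, hδ, hδ₀⟩ := ((htendsto.eventually_lt_const (ENNReal.ofReal_pos.2 hε)).and
    self_mem_nhdsWithin).exists
  refine ⟨δ, hδ₀, fun i s hs hsδ ↦ ?_⟩
  calc eLpNorm (s.indicator (f i)) p μ
    _ = eLpNorm (f i) p (μ.restrict s) := eLpNorm_indicator_eq_eLpNorm_restrict hs
    _ ≤ eLpNorm (f i) q (μ.restrict s) * μ s ^ (1 / p.toReal - 1 / q.toReal) := by
        simpa using eLpNorm_le_eLpNorm_mul_rpow_measure_univ hpq.le (hf i).restrict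
    _ ≤ C * ENNReal.ofReal δ ^ (1 / p.toReal - 1 / q.toReal) := by
        gcongr
        exact (eLpNorm_mono_measure _ Measure.restrict_le_self).trans (hfC i)
    _ ≤ ENNReal.ofReal ε := hδ.le

theorem tendsto_eLpNorm_sub_of_tendstoInMeasure [IsFiniteMeasure μ] {f : ℕ → α → E} {g : α → E}
    {p q : ℝ≥0∞} (hp : 1 ≤ p) (hpq : p < q) (hf : ∀ j, AEStronglyMeasurable (f j) μ) {C : ℝ≥0∞}
    (hC : C ≠ ⊤) (hfC : ∀ᶠ j in atTop, eLpNorm (f j) q μ ≤ C)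
    (hconv : TendstoInMeasure μ f atTop g) :
    Tendsto (fun j ↦ eLpNorm (f j - g) p μ) atTop (nhds 0) := by
  obtain ⟨N, hN⟩ := eventually_atTop.1 hfC
  have hfN (j : ℕ) : AEStronglyMeasurable (f (j + N)) μ := hf _
  have hfNC (j : ℕ) : eLpNorm (f (j + N)) q μ ≤ C := hN _ (Nat.le_add_left N j)
  have hconvN : TendstoInMeasure μ (fun j ↦ f (j + N)) atTop g :=
    hconv.comp (tendsto_add_atTop_nat N)
  have hunif : UnifIntegrable (fun j ↦ f (j + N)) p μ :=
    unifIntegrable_of_forall_eLpNorm_le (one_pos.trans_le hp).ne' hpq hfN hC hfNC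
  have hg : MemLp g q μ := ⟨hconv.aestronglyMeasurable hf,
    (eLpNorm_le_of_tendstoInMeasure hfC hconv hf).trans_lt hC.lt_top⟩
  exact (tendsto_add_atTop_iff_nat N).1 <|
    tendsto_Lp_finite_of_tendstoInMeasure hp (hpq.trans_le le_top).ne hfN
      (hg.mono_exponent hpq.le) hunif hconvN

lemma tendsto_eLpNorm_zero_of_exponent_le [IsFiniteMeasure μ] {ι : Type*} {l : Filter ι}
    {f : ι → α → E} {p q : ℝ≥0∞} (hp : p ≠ 0) (hpq : p ≤ q)
    (hf : ∀ j, AEStronglyMeasurable (f j) μ)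
    (h : Tendsto (fun j ↦ eLpNorm (f j) q μ) l (nhds 0)) :
    Tendsto (fun j ↦ eLpNorm (f j) p μ) l (nhds 0) := by
  have hexp : 0 ≤ 1 / p.toReal - 1 / q.toReal := by
    rw [sub_nonneg, ← ENNReal.toReal_one, ← ENNReal.toReal_div, ← ENNReal.toReal_div]
    exact ENNReal.toReal_mono (by simp [hp]) (ENNReal.div_le_div_left hpq 1)
  have hmul := ENNReal.Tendsto.mul_const h
    (.inr (ENNReal.rpow_ne_top_of_nonneg hexp (measure_ne_top μ Set.univ)))
  rw [zero_mul] at hmul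
  exact tendsto_of_tendsto_of_tendsto_of_le_of_le tendsto_const_nhds hmul (fun _ ↦ zero_le)
    fun j ↦ eLpNorm_le_eLpNorm_mul_rpow_measure_univ hpq (hf j)

end Moments

lemma lt_coe_neg_of_lt_norm_toReal {x : EReal} {M t : ℝ} (hx : x ≤ M) (hMt : M ≤ t)
    (ht : t < ‖x.toReal‖) : x < ((-t : ℝ) : EReal) := by
  induction x with
  | bot => exact EReal.bot_lt_coe _
  | top => exact absurd hx (EReal.coe_lt_top M).not_ge
  | coe a =>
    rw [EReal.coe_le_coe_iff] at hx
    rw [EReal.toReal_coe, Real.norm_eq_abs, lt_abs] at ht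
    rw [EReal.coe_lt_coe_iff]
    rcases ht with ht | ht <;> linarith

namespace HasUniformExpTails

variable {ι α : Type*} {u : ι → α → EReal} {l : Filter ι} [MeasurableSpace α] {μ : Measure α}
  [IsFiniteMeasure μ]

lemma exists_eventually_measure_lt_norm_toReal_le (h : HasUniformExpTails u l μ) {M : ℝ}
    (hM : ∀ j, ∀ᵐ y ∂μ, u j y ≤ M) :
    ∃ C c : ℝ, 0 < c ∧ ∀ᶠ j in l, ∀ t : ℝ, 0 ≤ t →
      μ {y | t < ‖(u j y).toReal‖} ≤ ENNReal.ofReal (C * Real.exp (-(c * t))) := by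
  obtain ⟨C, c, hc, h⟩ := h
  refine ⟨max C (μ.real Set.univ * Real.exp (c * M)), c, hc, h.mono fun j hj t ht ↦ ?_⟩
  rcases le_or_gt M t with hMt | htM
  · have hle : μ {y | t < ‖(u j y).toReal‖} ≤ μ {y | u j y < ((-t : ℝ) : EReal)} := by
      refine measure_mono_ae ?_
      filter_upwards [hM j] with y hy using lt_coe_neg_of_lt_norm_toReal hy hMt
    refine (hle.trans (hj t ht)).trans (ENNReal.ofReal_le_ofReal ?_)
    gcongr
    exact le_max_left _ _
  · refine (measure_mono (Set.subset_univ _)).trans ?_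
    rw [← ofReal_measureReal]
    refine ENNReal.ofReal_le_ofReal ?_
    calc μ.real Set.univ
      _ ≤ μ.real Set.univ * Real.exp (c * M - c * t) := by
          refine le_mul_of_one_le_right measureReal_nonneg (Real.one_le_exp ?_)
          linarith [mul_le_mul_of_nonneg_left htM.le hc.le]
      _ = μ.real Set.univ * Real.exp (c * M) * Real.exp (-(c * t)) := by
          rw [mul_assoc, ← Real.exp_add, sub_eq_add_neg]
      _ ≤ _ := by
          gcongr
          exact le_max_right _ _

theorem exists_eventually_eLpNorm_toReal_le (h : HasUniformExpTails u l μ) {M : ℝ}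
    (hM : ∀ j, ∀ᵐ y ∂μ, u j y ≤ M) (hmeas : ∀ j, AEMeasurable (fun y ↦ (u j y).toReal) μ) {q : ℝ}
    (hq : 0 < q) :
    ∃ C ≠ (⊤ : ℝ≥0∞), ∀ᶠ j in l,
      eLpNorm (fun y ↦ (u j y).toReal) (ENNReal.ofReal q) μ ≤ C := by
  obtain ⟨C, c, hc, htail⟩ := h.exists_eventually_measure_lt_norm_toReal_le hM
  refine ⟨ENNReal.ofReal (q * (C * ((1 / c) ^ q * Real.Gamma q))) ^ (1 / q),
    ENNReal.rpow_ne_top_of_nonneg (one_div_nonneg.2 hq.le) ENNReal.ofReal_ne_top,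
    htail.mono fun j hj ↦ ?_⟩
  exact eLpNorm_le_of_measure_lt_norm_le_exp (hmeas j).aestronglyMeasurable hc hq
    fun t ht ↦ hj t ht.le

end HasUniformExpTails

theorem psh_tendstoLocallyInMeasure_tendsto_Lp_loc_general {n : ℕ} {D : Set (Fin n → ℂ)}
    (hD : IsOpen D) (hconn : IsPreconnected D) {u : ℕ → (Fin n → ℂ) → EReal}
    {f : (Fin n → ℂ) → ℝ} (hu : ∀ j, PlurisubharmonicOn (u j) D)
    (hne : ∀ j, ∃ z ∈ D, u j z ≠ ⊥)
    (hbdd : ∀ K ⊆ D, IsCompact K → ∃ M : ℝ, ∀ j, ∀ z ∈ K, u j z ≤ M)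
    (hconv : ∀ K ⊆ D, IsCompact K →
      TendstoInMeasure (volume.restrict K) (fun j z ↦ (u j z).toReal) atTop f)
    {p : ℝ} (hp : 0 < p) {K : Set (Fin n → ℂ)} (hK : IsCompact K) (hKD : K ⊆ D) :
    Tendsto (fun j ↦ eLpNorm (fun z ↦ (u j z).toReal - f z) (ENNReal.ofReal p)
      (volume.restrict K)) atTop (nhds 0) := by
  have : IsFiniteMeasure (volume.restrict K) := ⟨by simpa using hK.measure_lt_top⟩
  have htails : HasUniformExpTails u atTop (volume.restrict K) := by
    obtain ⟨a, ha⟩ : D.Nonempty := (hne 0).imp fun z hz ↦ hz.1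
    exact hasUniformExpTails_restrict_of_isCompact hD hconn hu hbdd
      ⟨a, ha, nonCollapsingAt_of_tendstoInMeasure hD hconn hu hne hconv ha⟩ hK hKD
  have hmeas (j : ℕ) : AEStronglyMeasurable (fun z ↦ (u j z).toReal) (volume.restrict K) :=
    ((hu j).aemeasurable_toReal hK hKD).aestronglyMeasurable
  obtain ⟨M, hM⟩ := hbdd K hKD hK
  obtain ⟨C, hC, huC⟩ := htails.exists_eventually_eLpNorm_toReal_le
    (fun j ↦ (ae_restrict_mem hK.measurableSet).mono (hM j)) (fun j ↦ (hmeas j).aemeasurable)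
    (show 0 < max p 1 + 1 by positivity)
  have hfK := (hconv K hKD hK).aestronglyMeasurable hmeas
  refine tendsto_eLpNorm_zero_of_exponent_le (ENNReal.ofReal_pos.2 hp).ne'
    (ENNReal.ofReal_le_ofReal (le_max_left p 1)) (fun j ↦ (hmeas j).sub hfK) ?_
  refine tendsto_eLpNorm_sub_of_tendstoInMeasure (by simp) ?_ hmeas hC huC (hconv K hKD hK)
  exact ENNReal.ofReal_lt_ofReal_iff'.2 ⟨lt_add_one _, by positivity⟩

/-- If psh functions `φ_j` on a domain `D` are locally uniformly bounded above and
converge locally in measure to a psh function `φ`, then they converge in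
`L^p_loc` for every `0 < p < ∞`. -/
theorem psh_tendstoLocallyInMeasure_tendsto_Lp_loc {n : ℕ}
    (D : Set ((Fin n → ℂ))) (hD : IsOpen D) (hconn : IsConnected D)
    (φ : (Fin n → ℂ) → EReal) (φseq : ℕ → (Fin n → ℂ) → EReal)
    (hφ : PlurisubharmonicOn φ D) (hφseq : ∀ j, PlurisubharmonicOn (φseq j) D)
    (hφne : ∃ z ∈ D, φ z ≠ ⊥) (hφseqne : ∀ j, ∃ z ∈ D, φseq j z ≠ ⊥)
    (hbdd : ∀ K : Set ((Fin n → ℂ)), IsCompact K → K ⊆ D →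
      ∃ M : ℝ, ∀ j, ∀ z ∈ K, φseq j z ≤ (M : EReal))
    (hmeas : ∀ K : Set ((Fin n → ℂ)), IsCompact K → K ⊆ D →
      TendstoInMeasure (volume.restrict K)
        (fun j z => (φseq j z).toReal) atTop (fun z => (φ z).toReal)) :
    ∀ p : ℝ, 0 < p →
      ∀ K : Set ((Fin n → ℂ)), IsCompact K → K ⊆ D →
        Tendsto
          (fun j => eLpNorm (fun z => (φseq j z).toReal - (φ z).toReal)
            (ENNReal.ofReal p) (volume.restrict K)) atTop (nhds 0) := by
  intro p hp K hK hKD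
  exact psh_tendstoLocallyInMeasure_tendsto_Lp_loc_general hD hconn.isPreconnected hφseq hφseqne
    (fun L hLD hL ↦ hbdd L hL hLD) (fun L hLD hL ↦ hmeas L hL hLD) hp hK hKD
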